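/- Let R > 0 and ε > 0, and let ψ̃ be a smooth subharmonic function on an open neighborhood of the closed disk of radius R centered at 0 in ℂ, satisfying ψ̃ ≤ 1 on the closed disk and ψ̃(0) ≥ 0. Then the mass a := (1/2π) ∫_{B_{e^{−1/2−ε} R}(0)} Δψ̃(ζ) dA(ζ) satisfies a ≤ 2/(1+2ε); in particular a < 2. -/

import Mathlib

open MeasureTheory

/-- The Laplacian `Δf = ∂²f/∂x² + ∂²f/∂y²` of a function `f : ℂ → ℝ`, expressed via
iterated directional (Fréchet) derivatives in the directions `1` and `i`. -/
noncomputable def laplacian (f : ℂ → ℝ) (z : ℂ) : ℝ :=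
  fderiv ℝ (fun w => fderiv ℝ f w 1) z 1 +
    fderiv ℝ (fun w => fderiv ℝ f w Complex.I) z Complex.I

open Set Filter Topology Real

lemma swap_aux (f f' : ℝ → ℝ → ℝ) (hf : ∀ θ t, HasDerivAt (fun t => f t θ) (f' t θ) t)
    (hc : Continuous (Function.uncurry f')) (hcf : ∀ t, Continuous (f t)) (a b : ℝ) :
    (∫ θ in (-π)..π, f b θ) - (∫ θ in (-π)..π, f a θ)
      = ∫ t in a..b, ∫ θ in (-π)..π, f' t θ := by
  rw [MeasureTheory.intervalIntegral_intervalIntegral_swap, ← intervalIntegral.integral_sub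
    ((hcf b).intervalIntegrable _ _) ((hcf a).intervalIntegrable _ _)]
  · apply intervalIntegral.integral_congr
    intro θ _
    simp only
    rw [intervalIntegral.integral_eq_sub_of_hasDerivAt (fun t _ => hf θ t)]
    apply Continuous.intervalIntegrable
    exact hc.comp (by fun_prop : Continuous fun t => (t, θ))
  · refine IntegrableOn.mono_set (hc.continuousOn.integrableOn_compact
      (isCompact_uIcc.prod isCompact_uIcc)) (prod_mono uIoc_subset_uIcc uIoc_subset_uIcc)

lemma trace_aux (B : ℂ →L[ℝ] ℂ →L[ℝ] ℝ) (θ : ℝ) :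
    B (Complex.exp (θ * Complex.I)) (Complex.exp (θ * Complex.I)) +
      B (Complex.I * Complex.exp (θ * Complex.I)) (Complex.I * Complex.exp (θ * Complex.I)) =
    B 1 1 + B Complex.I Complex.I := by
  have e1 : Complex.exp (θ * Complex.I) = (cos θ) • (1:ℂ) + (sin θ) • Complex.I := by
    rw [Complex.exp_mul_I]; simp
  have e2 : Complex.I * Complex.exp (θ * Complex.I) = (-sin θ) • (1:ℂ) + (cos θ) • Complex.I := by
    rw [e1]; apply Complex.ext <;> simp
  rw [e2, e1]
  simp only [map_add, map_smul, add_apply, smul_apply,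
    smul_eq_mul]
  linear_combination (B 1 1 + B Complex.I Complex.I) * (sin_sq_add_cos_sq θ)

lemma lap_eq {φ : ℂ → ℝ} (h : ContDiff ℝ 2 φ) (z : ℂ) :
    laplacian φ z = fderiv ℝ (fderiv ℝ φ) z 1 1 + fderiv ℝ (fderiv ℝ φ) z Complex.I Complex.I := by
  have hd : DifferentiableAt ℝ (fderiv ℝ φ) z :=
    ((h.fderiv_right (m := 1) (by norm_num)).differentiable (by norm_num)) z
  unfold laplacian
  rw [fderiv_clm_apply hd (by fun_prop), fderiv_clm_apply hd (by fun_prop)]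
  simp

lemma lap_cont {φ : ℂ → ℝ} (h : ContDiff ℝ 2 φ) : Continuous (laplacian φ) := by
  have : laplacian φ = _ := funext (lap_eq h)
  rw [this]
  have : Continuous (fderiv ℝ (fderiv ℝ φ)) := 
    (h.fderiv_right (m := 1) (by norm_num)).continuous_fderiv (by norm_num)
  fun_prop

lemma area_polar (f : ℂ → ℝ) (hf : Continuous f) (r : ℝ) (hr : 0 < r) :
    ∫ z in Metric.ball (0:ℂ) r, f z =
      ∫ t in (0:ℝ)..r, ∫ θ in (-π)..π, t * f (t * Complex.exp (θ * Complex.I)) := by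
  rw [← integral_indicator measurableSet_ball, ← Complex.integral_comp_polarCoord_symm,
    intervalIntegral.integral_of_le hr.le]
  have hc : Continuous fun p : ℝ × ℝ => p.1 * f (p.1 * Complex.exp (p.2 * Complex.I)) := by fun_prop
  have hπ : (-π) ≤ π := by linarith [pi_pos]
  simp_rw [intervalIntegral.integral_of_le hπ]
  have := setIntegral_prod (μ := volume) (ν := volume) (s := Ioc 0 r) (t := Ioc (-π) π)
    (fun p : ℝ × ℝ => p.1 * f (p.1 * Complex.exp (p.2 * Complex.I)))
    ((hc.continuousOn.integrableOn_compact
      ((isCompact_Icc (a := (0:ℝ)) (b := r)).prod (isCompact_Icc (a := -π) (b := π)))).mono_set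
       (prod_mono Ioc_subset_Icc_self Ioc_subset_Icc_self))
  rw [← Measure.volume_eq_prod] at this
  rw [← this]
  have e : (fun p : ℝ × ℝ => p.1 • (Metric.ball (0:ℂ) r).indicator f (Complex.polarCoord.symm p))
      =  (Complex.polarCoord.symm ⁻¹' Metric.ball (0:ℂ) r).indicator
        (fun p : ℝ × ℝ => p.1 * f (p.1 * Complex.exp (p.2 * Complex.I))) := by
    ext p
    by_cases hp : Complex.polarCoord.symm p ∈ Metric.ball (0:ℂ) r
    · rw [indicator_of_mem hp, indicator_of_mem (show p ∈ Complex.polarCoord.symm ⁻¹' Metric.ball (0:ℂ) r from hp),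
        Complex.polarCoord_symm_apply, Complex.exp_mul_I]
      simp
    · rw [indicator_of_notMem hp, indicator_of_notMem (show p ∉ Complex.polarCoord.symm ⁻¹' Metric.ball (0:ℂ) r from hp)]
      simp
  have hm : Measurable (fun p : ℝ × ℝ => Complex.polarCoord.symm p) := by
    simp only [Complex.polarCoord_symm_apply]
    fun_prop
  rw [e, setIntegral_indicator (hm measurableSet_ball)]
  have e2 : polarCoord.target ∩ Complex.polarCoord.symm ⁻¹' Metric.ball (0:ℂ) r
     = Ioo 0 r ×ˢ Ioo (-π) π := by
    ext p
    simp only [polarCoord_target, mem_inter_iff, mem_prod, mem_preimage, Metric.mem_ball,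
      dist_zero_right, Complex.norm_polarCoord_symm, mem_Ioi, mem_Ioo]
    constructor
    · rintro ⟨⟨h1, h2⟩, h3⟩
      rw [abs_of_pos h1] at h3
      exact ⟨⟨h1, h3⟩, h2⟩
    · rintro ⟨⟨h1, h3⟩, h2⟩
      rw [abs_of_pos h1]
      exact ⟨⟨h1, h2⟩, h3⟩
  rw [e2]
  apply setIntegral_congr_set
  rw [Measure.volume_eq_prod]
  exact Measure.set_prod_ae_eq Ioo_ae_eq_Ioc Ioo_ae_eq_Ioc

lemma ext_aux (R : ℝ) (hR : 0 < R) (ψ : ℂ → ℝ) (U : Set ℂ) (hU : IsOpen U)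
    (hUR : Metric.closedBall (0 : ℂ) R ⊆ U)
    (hsm : ContDiffOn ℝ (⊤ : ℕ∞) ψ U) :
    ∃ φ : ℂ → ℝ, ContDiff ℝ 2 φ ∧ ∀ z ∈ Metric.closedBall (0:ℂ) R, φ =ᶠ[𝓝 z] ψ := by
  obtain ⟨δ, hδ, h⟩ := (isCompact_closedBall (0:ℂ) R).exists_thickening_subset_open hU hUR
  rw [thickening_closedBall hδ hR.le] at h
  let b : ContDiffBump (0:ℂ) := ⟨R + δ/3, R + 2*δ/3, by linarith, by linarith⟩
  refine ⟨fun z => b z * ψ z, ?_, ?_⟩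
  · rw [contDiff_iff_contDiffAt]
    intro x
    by_cases hx : x ∈ U
    · exact b.contDiffAt.mul ((hsm.contDiffAt (hU.mem_nhds hx)).of_le (by exact_mod_cast le_top))
    · have : x ∉ tsupport b := by
        rw [b.tsupport_eq]
        intro h'
        apply hx
        apply h
        rw [Metric.mem_closedBall] at h'
        rw [Metric.mem_ball]
        change dist x 0 ≤ R + 2*δ/3 at h'
        linarith
      have h2 := notMem_tsupport_iff_eventuallyEq.1 this
      refine (contDiffAt_const (c := (0:ℝ))).congr_of_eventuallyEq ?_
      filter_upwards [h2] with y hy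
      simp [hy]
  · intro z hz
    have : z ∈ Metric.ball (0:ℂ) b.rIn := by
      rw [Metric.mem_closedBall] at hz
      rw [Metric.mem_ball]
      change dist z 0 < R + δ/3
      linarith
    filter_upwards [b.eventuallyEq_one_of_mem_ball this] with y hy
    simp [hy]

lemma lap_congr {φ ψ : ℂ → ℝ} {z : ℂ} (h : φ =ᶠ[𝓝 z] ψ) : laplacian φ z = laplacian ψ z := by
  unfold laplacian
  have h2 := h.fderiv (𝕜 := ℝ)
  have h3 : ∀ v : ℂ, (fun w => fderiv ℝ φ w v) =ᶠ[𝓝 z] fun w => fderiv ℝ ψ w v := by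
    intro v
    filter_upwards [h2] with w hw
    rw [hw]
  rw [(h3 1).fderiv_eq, (h3 Complex.I).fderiv_eq]

lemma main_aux (R r : ℝ) (hr : 0 < r) (hrR : r < R) (φ : ℂ → ℝ) (h : ContDiff ℝ 2 φ)
    (hsh : ∀ z ∈ Metric.closedBall (0:ℂ) R, 0 ≤ laplacian φ z)
    (h1 : ∀ z ∈ Metric.closedBall (0 : ℂ) R, φ z ≤ 1) (h0 : 0 ≤ φ 0) :
    (∫ z in Metric.ball (0:ℂ) r, laplacian φ z) * log (R / r) ≤ 2 * π := by
  have hR : 0 < R := hr.trans hrR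
  have hπ : (-π) ≤ π := by linarith [pi_pos]
  have hD : ContDiff ℝ 1 (fderiv ℝ φ) := h.fderiv_right (m := 1) (by norm_num)
  have hDc : Continuous (fderiv ℝ φ) := hD.continuous
  have hD2c : Continuous (fderiv ℝ (fderiv ℝ φ)) := hD.continuous_fderiv (by norm_num)
  have hφc : Continuous φ := h.continuous
  have hLc := lap_cont h
  let u : ℝ → ℂ := fun θ => Complex.exp (θ * Complex.I)
  have huc : Continuous u := by fun_prop
  have hud : ∀ θ, HasDerivAt u (Complex.I * u θ) θ := by
    intro θ
    have := ((Complex.ofRealCLM.hasDerivAt (x := θ)).mul_const Complex.I).cexp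
    simpa [u, mul_comm] using this
  have hun : ∀ θ, ‖u θ‖ = 1 := fun θ => Complex.norm_exp_ofReal_mul_I θ
  have htu : ∀ (θ t : ℝ), HasDerivAt (fun t : ℝ => (t:ℂ) * u θ) (u θ) t := by
    intro θ t
    simpa using (Complex.ofRealCLM.hasDerivAt (x := t)).mul_const (u θ)
  -- first derivative
  have A1 : ∀ a b : ℝ, (∫ θ in (-π)..π, φ (b * u θ)) - (∫ θ in (-π)..π, φ (a * u θ))
      = ∫ t in a..b, ∫ θ in (-π)..π, fderiv ℝ φ (t * u θ) (u θ) := by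
    apply swap_aux (fun t θ => φ (t * u θ))
    · intro θ t
      exact ((h.differentiable (by norm_num)) _).hasFDerivAt.comp_hasDerivAt t (htu θ t)
    · unfold Function.uncurry; fun_prop
    · fun_prop
  set G : ℝ → ℝ := fun t => ∫ θ in (-π)..π, fderiv ℝ φ (t * u θ) (t * u θ) with hG
  have hDd : ∀ z, HasFDerivAt (fderiv ℝ φ) (fderiv ℝ (fderiv ℝ φ) z) z := fun z =>
    (hD.differentiable (by norm_num) z).hasFDerivAt
  have key : ∀ t : ℝ, ∫ θ in (-π)..π, (fderiv ℝ (fderiv ℝ φ) (t * u θ) (u θ) (t * u θ)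
      + fderiv ℝ φ (t * u θ) (u θ)) = ∫ θ in (-π)..π, t * laplacian φ (t * u θ) := by
    intro t
    have hz : ∫ θ in (-π)..π, (fderiv ℝ (fderiv ℝ φ) (t * u θ) (t * (Complex.I * u θ))
        (Complex.I * u θ) + fderiv ℝ φ (t * u θ) (Complex.I * (Complex.I * u θ))) = 0 := by
      rw [intervalIntegral.integral_eq_sub_of_hasDerivAt
        (f := fun θ => fderiv ℝ φ (t * u θ) (Complex.I * u θ))]
      · have : u π = u (-π) := by
          simp only [u]
          push_cast
          rw [neg_mul, Complex.exp_neg, Complex.exp_pi_mul_I]; norm_num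
        simp [this]
      · intro θ _
        exact ((hDd _).comp_hasDerivAt θ ((hud θ).const_mul (t:ℂ))).clm_apply
          ((hud θ).const_mul Complex.I)
      · apply Continuous.intervalIntegrable; fun_prop
    have heq : ∀ θ : ℝ, fderiv ℝ (fderiv ℝ φ) (t * u θ) (u θ) (t * u θ)
        + fderiv ℝ φ (t * u θ) (u θ) = t * laplacian φ (t * u θ) -
        (fderiv ℝ (fderiv ℝ φ) (t * u θ) (t * (Complex.I * u θ))
        (Complex.I * u θ) + fderiv ℝ φ (t * u θ) (Complex.I * (Complex.I * u θ))) := by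
      intro θ
      have e1 : Complex.I * (Complex.I * u θ) = - u θ := by
        rw [← mul_assoc, Complex.I_mul_I]; ring
      have e2 : ∀ w : ℂ, (t:ℂ) * w = t • w := fun w => (Complex.real_smul).symm
      have e3 := trace_aux (fderiv ℝ (fderiv ℝ φ) (t * u θ)) θ
      rw [e1, lap_eq h, ← e3, e2 (Complex.I * u θ)]
      have e4 : fderiv ℝ (fderiv ℝ φ) (t * u θ) (u θ) (t * u θ)
          = t * fderiv ℝ (fderiv ℝ φ) (t * u θ) (u θ) (u θ) := by
        generalize fderiv ℝ (fderiv ℝ φ) (t * u θ) = B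
        rw [e2, map_smul, smul_eq_mul]
      rw [e4]
      simp only [map_smul, map_neg, smul_apply, smul_eq_mul]
      simp only [u]
      ring
    simp_rw [heq]
    rw [intervalIntegral.integral_sub, hz, sub_zero]
    · apply Continuous.intervalIntegrable; fun_prop
    · apply Continuous.intervalIntegrable; fun_prop
  have A2 : ∀ b : ℝ, G b = ∫ t in (0:ℝ)..b, ∫ θ in (-π)..π, t * laplacian φ (t * u θ) := by
    intro b
    have := swap_aux (fun t θ => fderiv ℝ φ (t * u θ) (t * u θ))
      (fun t θ => fderiv ℝ (fderiv ℝ φ) (t * u θ) (u θ) (t * u θ)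
      + fderiv ℝ φ (t * u θ) (u θ)) ?_ ?_ ?_ 0 b
    · simp only [key] at this
      simpa [G] using this
    · intro θ t
      exact ((hDd _).comp_hasDerivAt t (htu θ t)).clm_apply (htu θ t)
    · unfold Function.uncurry; fun_prop
    · fun_prop
  have hLcc : Continuous fun t : ℝ => ∫ θ in (-π)..π, t * laplacian φ (t * u θ) := by
    apply intervalIntegral.continuous_parametric_intervalIntegral_of_continuous'
    unfold Function.uncurry; fun_prop
  have hmem : ∀ t θ, 0 ≤ t → t ≤ R → (t:ℂ) * u θ ∈ Metric.closedBall (0:ℂ) R := by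
    intro t θ h0 h1
    simp [hun, abs_of_nonneg h0, h1]
  have hLnn : ∀ t, 0 ≤ t → t ≤ R → 0 ≤ ∫ θ in (-π)..π, t * laplacian φ (t * u θ) := by
    intro t h0 h1
    exact intervalIntegral.integral_nonneg hπ
      fun θ _ => mul_nonneg h0 (hsh _ (hmem t θ h0 h1))
  have hGmono : ∀ a b, 0 ≤ a → a ≤ b → b ≤ R → G a ≤ G b := by
    intro a b h0 hab hb
    rw [← sub_nonneg, A2, A2, intervalIntegral.integral_interval_sub_left
      (hLcc.intervalIntegrable _ _) (hLcc.intervalIntegrable _ _)]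
    exact intervalIntegral.integral_nonneg hab
      fun t ht => hLnn t (h0.trans ht.1) (ht.2.trans hb)
  have hG0 : G 0 = 0 := by rw [A2]; simp
  have hGr : ∫ z in Metric.ball (0:ℂ) r, laplacian φ z = G r := by
    rw [A2, area_polar _ hLc r hr]
  have hH : ∀ t : ℝ, 0 < t → ∫ θ in (-π)..π, fderiv ℝ φ (t * u θ) (u θ) = G t * t⁻¹ := by
    intro t ht
    have : G t = t * ∫ θ in (-π)..π, fderiv ℝ φ (t * u θ) (u θ) := by
      rw [← intervalIntegral.integral_const_mul]
      apply intervalIntegral.integral_congr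
      intro θ _
      simp only
      rw [← Complex.real_smul, map_smul, smul_eq_mul]
    rw [this]; field_simp
  have hHc : Continuous fun t : ℝ => ∫ θ in (-π)..π, fderiv ℝ φ (t * u θ) (u θ) := by
    apply intervalIntegral.continuous_parametric_intervalIntegral_of_continuous'
    unfold Function.uncurry; fun_prop
  have B1 : 0 ≤ ∫ t in (0:ℝ)..r, ∫ θ in (-π)..π, fderiv ℝ φ (t * u θ) (u θ) := by
    rw [intervalIntegral.integral_of_le hr.le]
    apply setIntegral_nonneg measurableSet_Ioc
    intro t ht
    rw [hH t ht.1]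
    have := hGmono 0 t le_rfl ht.1.le (ht.2.trans hrR.le)
    rw [hG0] at this
    exact mul_nonneg this (inv_nonneg.2 ht.1.le)
  have B2 : G r * log (R / r) ≤ ∫ t in r..R, ∫ θ in (-π)..π, fderiv ℝ φ (t * u θ) (u θ) := by
    rw [← integral_inv_of_pos hr hR, ← intervalIntegral.integral_const_mul]
    apply intervalIntegral.integral_mono_on hrR.le
    · apply ContinuousOn.intervalIntegrable
      apply continuousOn_const.mul (continuousOn_id.inv₀ _)
      intro x hx
      rw [uIcc_of_le hrR.le] at hx
      exact (hr.trans_le hx.1).ne'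
    · exact hHc.intervalIntegrable _ _
    · intro t ht
      have ht0 := hr.trans_le ht.1
      rw [hH t ht0]
      exact mul_le_mul_of_nonneg_right (hGmono r t hr.le ht.1 ht.2) (inv_nonneg.2 ht0.le)
  rw [← A1] at B1 B2
  have C1 : ∫ θ in (-π)..π, φ (R * u θ) ≤ 2 * π := by
    have : ∫ θ in (-π)..π, φ (R * u θ) ≤ ∫ θ in (-π)..π, (1:ℝ) := by
      apply intervalIntegral.integral_mono_on hπ
      · apply Continuous.intervalIntegrable; fun_prop
      · simp
      · intro θ _; exact h1 _ (hmem R θ hR.le le_rfl)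
    refine this.trans (le_of_eq ?_)
    simp; ring
  have C0 : 0 ≤ ∫ θ in (-π)..π, φ ((0:ℝ) * u θ) :=
    intervalIntegral.integral_nonneg hπ fun θ _ => by simpa using h0
  rw [hGr]
  linarith

/-- If `ψ̃` is smooth subharmonic on an open neighborhood of the closed disk of radius `R > 0`,
with `ψ̃ ≤ 1` on the closed disk and `ψ̃(0) ≥ 0`, and `ε > 0`, then the mass
`a := (1/2π) ∫_{B_{e^{−1/2−ε} R}(0)} Δψ̃ dA` satisfies `a ≤ 2/(1+2ε)`; in particular `a < 2`. -/
theorem stmt_6 (R ε : ℝ) (hR : 0 < R) (hε : 0 < ε)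
    (ψ : ℂ → ℝ) (U : Set ℂ) (hU : IsOpen U)
    (hUR : Metric.closedBall (0 : ℂ) R ⊆ U)
    (hsm : ContDiffOn ℝ (⊤ : ℕ∞) ψ U) (hsh : ∀ z ∈ U, 0 ≤ laplacian ψ z)
    (h1 : ∀ z ∈ Metric.closedBall (0 : ℂ) R, ψ z ≤ 1) (h0 : 0 ≤ ψ 0) :
    (1 / (2 * Real.pi)) *
        (∫ ζ in Metric.ball (0 : ℂ) (Real.exp (-(1 / 2) - ε) * R), laplacian ψ ζ)
      ≤ 2 / (1 + 2 * ε) ∧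
    (1 / (2 * Real.pi)) *
        (∫ ζ in Metric.ball (0 : ℂ) (Real.exp (-(1 / 2) - ε) * R), laplacian ψ ζ)
      < 2 := by
  have hmain : (1 / (2 * Real.pi)) *
        (∫ ζ in Metric.ball (0 : ℂ) (Real.exp (-(1 / 2) - ε) * R), laplacian ψ ζ)
      ≤ 2 / (1 + 2 * ε) := by
    obtain ⟨φ, hφ, he⟩ := ext_aux R hR ψ U hU hUR hsm
    set r := Real.exp (-(1 / 2) - ε) * R with hrdef
    have hr : 0 < r := by positivity
    have hrR : r < R := by
      have : Real.exp (-(1 / 2) - ε) < 1 := by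
        have := Real.exp_lt_exp.2 (show -(1 / 2) - ε < 0 by linarith)
        rwa [Real.exp_zero] at this
      nlinarith
    have hlog : Real.log (R / r) = 1 / 2 + ε := by
      rw [hrdef, Real.log_div hR.ne' (by positivity), Real.log_mul (by positivity) hR.ne',
        Real.log_exp]
      ring
    have hint : ∫ ζ in Metric.ball (0 : ℂ) r, laplacian ψ ζ
        = ∫ ζ in Metric.ball (0 : ℂ) r, laplacian φ ζ := by
      apply setIntegral_congr_fun measurableSet_ball
      intro z hz
      exact (lap_congr (he z (Metric.ball_subset_closedBall
        (Metric.ball_subset_ball hrR.le hz)))).symm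
    have := main_aux R r hr hrR φ hφ
      (fun z hz => by rw [lap_congr (he z hz)]; exact hsh z (hUR hz))
      (fun z hz => by rw [(he z hz).eq_of_nhds]; exact h1 z hz)
      (by rw [(he 0 (Metric.mem_closedBall_self hR.le)).eq_of_nhds]; exact h0)
    rw [hlog] at this
    rw [hint, le_div_iff₀ (by positivity), one_div, mul_assoc, inv_mul_le_iff₀ (by positivity)]
    linarith
  refine ⟨hmain, hmain.trans_lt ?_⟩
  rw [div_lt_iff₀ (by positivity)]
  linarith
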